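/- arXiv:1307.2806 — 2 statements merged into one kernel-verified Lean document; each statement's English description precedes it below -/
import Mathlib

section
/- Let k ≥ 3 be an integer, T = 2^k (so T ≥ 8), and let W = {w₁,…,wₙ} be positive integers with 2 ≤ wᵢ < T/2 and w₁ ≤ … ≤ wₙ. Set ε = 1/T², m = log₂T − 1, m' = ⌈log₂ wₙ⌉ and α = (T−ε)/((1−ε)(T−1)). Build the unit-density instance 𝓘 (each item's size equals its value): for each w ∈ W a regular item i_w of value w; for each k' ∈ {0,…,m} an auxiliary item j_{k'} of value 2^{k'}(1−ε); and dummy items d₀ of value T+ε and d_{k'} of value T·2^{k'} for k' ∈ {1,…,m'}. Let Π be the universal policy (d_{m'}, d_{m'−1}, …, d₁, d₀, j_m, j_{m−1}, …, j_0, i_{wₙ}, i_{w_{n−1}}, …, i_{w₁}). Then Π is α-robust if and only if no subset of W sums to T. -/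
/-!
Write `T = 2 ^ k`. All sizes equal their values, so what the policy loses at capacity `C` is the
capacity `rest` it leaves unused.

If some subset of `W` sums to `T`, take `C = T`: no dummy item fits, all auxiliary items are packed
with total value `(T - 1)(1 - ε)`, less than `2` units remain, so no regular item fits, and
`α (T - 1)(1 - ε) = T - ε < T`.

Conversely, suppose that no subset of `W` sums to `T`. Greedy scanning of a geometric family
`q, 2q, 4q, …` packs an integer multiple of `q` and leaves less than `q`, unless the whole family
fits (`rest_geom`). Applying this to the dummies (`q = 2T`) and to the auxiliary items (`q = 1 - ε`)
gives two regimes.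
* If some dummy is packed, either every item is packed or the unused capacity is at most `1 / T`
  times the packed value (`waste_of_dummy`), which is enough because `α ≥ 1 + 1 / T`.
* If no dummy is packed, then `C < T + ε`, and any feasible `S` has value `a + b (1 - ε)` with `a` a
  subset sum of `W` and `b < T`. An integrality argument gives `v(S) ≤ α v(Π(C))`, except possibly
  when `a = T` and `b = 0` (`light_case`), which the hypothesis excludes.
-/

/-- The packing of a list of items (a universal policy) for capacity `C`:
scan the list in order, starting from the empty packing, and add an item
whenever its size fits into the remaining capacity. -/
def pack {α R : Type*} [LinearOrder R] [Sub R] (size : α → R) : R → List α → List α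
  | _, [] => []
  | C, x :: xs => if size x ≤ C then x :: pack size (C - size x) xs else pack size C xs

/-! ### Greedy scanning of a list of sizes -/

/-- The capacity left unused after greedily scanning a list of sizes with capacity `C`. -/
def rest (C : ℚ) (l : List ℚ) : ℚ :=
  l.foldl (fun c x => if x ≤ c then c - x else c) C

lemma rest_cons (C x : ℚ) (l : List ℚ) :
    rest C (x :: l) = if x ≤ C then rest (C - x) l else rest C l := by
  unfold rest
  rw [List.foldl_cons]
  split_ifs <;> rfl

lemma rest_append (C : ℚ) (l₁ l₂ : List ℚ) : rest C (l₁ ++ l₂) = rest (rest C l₁) l₂ :=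
  List.foldl_append

/-- With unit densities, the packed value is the used capacity. -/
lemma sum_pack {β : Type*} (V : β → ℚ) (l : List β) :
    ∀ C : ℚ, ((pack V C l).map V).sum = C - rest C (l.map V) := by
  induction l with
  | nil => intro C; simp [pack, rest]
  | cons x l ih =>
    intro C
    rw [List.map_cons, rest_cons, pack]
    split_ifs
    · rw [List.map_cons, List.sum_cons, ih]; ring
    · exact ih C

lemma rest_le (l : List ℚ) : ∀ C : ℚ, (∀ x ∈ l, 0 ≤ x) → rest C l ≤ C := by
  induction l with
  | nil => intro C _; simp [rest]
  | cons x l ih =>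
    intro C h
    have hx := h x (by simp)
    have hl : ∀ y ∈ l, 0 ≤ y := fun y hy => h y (by simp [hy])
    rw [rest_cons]
    split_ifs
    · linarith [ih (C - x) hl]
    · exact ih C hl

lemma rest_eq_self (l : List ℚ) (C : ℚ) (h : ∀ x ∈ l, C < x) : rest C l = C := by
  induction l with
  | nil => simp [rest]
  | cons x l ih =>
    rw [rest_cons, if_neg (not_le.mpr (h x (by simp)))]
    exact ih fun y hy => h y (by simp [hy])

/-- If all sizes are at most `B`, then either less than `B` stays unused or every item fits: an
item that does not fit is larger than the capacity left at that moment. -/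
lemma rest_lt_or_all (B : ℚ) (l : List ℚ) :
    ∀ C : ℚ, (∀ x ∈ l, 0 ≤ x ∧ x ≤ B) → rest C l < B ∨ rest C l = C - l.sum := by
  induction l with
  | nil => intro C _; right; simp [rest]
  | cons x l ih =>
    intro C h
    have hx := h x (by simp)
    have hl : ∀ y ∈ l, 0 ≤ y ∧ y ≤ B := fun y hy => h y (by simp [hy])
    rw [rest_cons]
    split_ifs with hC
    · rcases ih (C - x) hl with h' | h'
      · exact Or.inl h'
      · right; rw [h', List.sum_cons]; ring
    · left
      have := rest_le l C fun y hy => (hl y hy).1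
      linarith

/-- Greedy scanning of `q * 2 ^ (n - 1), …, 2 * q, q` packs a multiple `N * q` and leaves less
than `q`, unless the whole family is packed. -/
lemma rest_geom (q : ℚ) (n : ℕ) :
    ∀ C : ℚ, 0 ≤ C → ∃ N : ℕ, N < 2 ^ n ∧
      rest C ((List.range n).reverse.map fun j => q * 2 ^ j) = C - N * q ∧
      0 ≤ C - N * q ∧ (C - N * q < q ∨ N + 1 = 2 ^ n) := by
  induction n with
  | zero => intro C hC; exact ⟨0, by simp, by simp [rest], by simpa using hC, by simp⟩
  | succ n ih =>
    intro C hC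
    rw [List.range_succ, List.reverse_append, List.reverse_singleton, List.singleton_append,
      List.map_cons, rest_cons]
    split_ifs with h
    · obtain ⟨N, hN, hr, h0, h1⟩ := ih (C - q * 2 ^ n) (by linarith)
      have e : C - q * 2 ^ n - N * q = C - ((N + 2 ^ n : ℕ) : ℚ) * q := by push_cast; ring
      rw [e] at hr h0 h1
      exact ⟨N + 2 ^ n, by rw [pow_succ]; omega, hr, h0, h1.imp id fun h => by
        rw [pow_succ]; omega⟩
    · obtain ⟨N, hN, hr, h0, h1⟩ := ih C hC
      refine ⟨N, by rw [pow_succ]; omega, hr, h0, Or.inl ?_⟩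
      rcases h1 with h1 | h1
      · exact h1
      · have : (N : ℚ) + 1 = 2 ^ n := by exact_mod_cast h1
        nlinarith

/-! ### Numerical estimates for the two regimes -/

/-- When a dummy is packed, the unused capacity is at most `δ` times the used one, or all items are
packed (the right-hand side of the second alternative is the total size of the instance). Here `δ = 1 / T`, `M = 2 ^ m'`, and `r₁`, `r₂`, `r₃`,
`r₄` are the capacities left after the dummies `d_{m'}, …, d₁`, after `d₀`, after the auxiliary
items, and after the regular items of total size `R`. -/
lemma waste_of_dummy {T δ M C R r₁ r₂ r₃ r₄ : ℚ} {N₁ N₃ : ℕ} (hT : 8 ≤ T) (hδ : T * δ = 1)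
    (hδ0 : 0 < δ) (hM : 2 ≤ M)
    (h₁ : r₁ = C - N₁ * (2 * T)) (hr₁ : r₁ < 2 * T ∨ (N₁ : ℚ) + 1 = M)
    (h₂ : r₂ = if T + δ ^ 2 ≤ r₁ then r₁ - (T + δ ^ 2) else r₁)
    (h₃ : r₃ = r₂ - N₃ * (1 - δ ^ 2)) (hr₃ : r₃ < 1 - δ ^ 2 ∨ (N₃ : ℚ) + 1 = T)
    (h₄ : r₄ ≤ r₃) (hr₄ : r₄ < M ∨ r₄ = r₃ - R) (hC : T + δ ^ 2 ≤ C) :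
    r₄ ≤ δ * (C - r₄) ∨
      C - r₄ = (M - 1) * (2 * T) + (T + δ ^ 2) + (T - 1) * (1 - δ ^ 2) + R := by
  have hδ1 : δ ≤ 1 / 8 := by nlinarith
  have hδ2 : δ ^ 2 ≤ δ / 8 := by nlinarith
  have hδ3 : 0 < δ ^ 2 := by positivity
  have hTδ2 : T * δ ^ 2 = δ := by linear_combination δ * hδ
  have key : ∀ L, L * T ≤ C - r₄ → r₄ ≤ L → r₄ ≤ δ * (C - r₄) := by
    intro L hL hr
    have h := mul_le_mul_of_nonneg_left hL hδ0.le
    have : δ * (L * T) = L := by linear_combination L * hδ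
    linarith
  have hN1 : (0 : ℚ) ≤ N₁ * (2 * T) := by positivity
  have hN3 : (0 : ℚ) ≤ N₃ * (1 - δ ^ 2) := mul_nonneg (by positivity) (by linarith)
  by_cases hbig : r₁ < 2 * T
  · by_cases hz : N₁ = 0
    · subst hz
      have e : r₁ = C := by rw [h₁]; push_cast; ring
      rw [if_pos (by rw [e]; exact hC)] at h₂
      left
      rcases hr₃ with hr₃ | hr₃
      · exact key 1 (by linarith) (by linarith)
      · have e3 : r₃ = r₂ - (T - 1) * (1 - δ ^ 2) := by rw [h₃, ← hr₃]; ring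
        have hr : r₄ ≤ 1 + δ - 2 * δ ^ 2 := by
          have : (T - 1) * (1 - δ ^ 2) = T - 1 - δ + δ ^ 2 := by linear_combination -hTδ2
          linarith
        exact key (1 + δ) (by linarith) (by linarith)
    · have h1 : (1 : ℚ) ≤ N₁ := by exact_mod_cast Nat.one_le_iff_ne_zero.mpr hz
      have h2T : 2 * T ≤ N₁ * (2 * T) := by nlinarith
      have hr2 : r₂ ≤ T + δ ^ 2 ∧ r₂ ≤ r₁ := by
        rw [h₂]; split_ifs with h <;> constructor <;> linarith
      have hr : r₄ ≤ 2 := by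
        rcases hr₃ with hr₃ | hr₃
        · linarith
        · have e3 : r₃ = r₂ - (T - 1) * (1 - δ ^ 2) := by rw [h₃, ← hr₃]; ring
          have : (T - 1) * (1 - δ ^ 2) = T - 1 - δ + δ ^ 2 := by linear_combination -hTδ2
          linarith
      exact Or.inl (key 2 (by linarith) hr)
  · have hN : (N₁ : ℚ) + 1 = M := hr₁.resolve_left hbig
    have hN' : (N₁ : ℚ) = M - 1 := by linarith
    rw [if_pos (by linarith)] at h₂
    rw [hN'] at h₁ hN1
    rcases hr₃ with hr₃ | hr₃
    · exact Or.inl (key 1 (by linarith) (by linarith))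
    · have hN3' : (N₃ : ℚ) = T - 1 := by linarith
      rw [hN3'] at h₃ hN3
      rcases hr₄ with hr₄ | hr₄
      · have : M * T ≤ (M - 1) * (2 * T) := by nlinarith
        exact Or.inl (key M (by linarith) hr₄.le)
      · right; linarith

/-- When no dummy is packed: a feasible set consists of regular items of total size `a` and auxiliary
items of total size `b (1 - δ ^ 2)`, and the auxiliary items packed by the policy have total size
`N (1 - δ ^ 2)`. The conclusion is the robustness bound multiplied by `T - 1`. -/
lemma light_case {T δ C : ℚ} {t N a b : ℕ} (ht : (t : ℚ) = T) (hT : 8 ≤ T) (hδ : T * δ = 1)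
    (hδ0 : 0 < δ) (hC : C < T + δ ^ 2) (hr : C - N * (1 - δ ^ 2) < 1 - δ ^ 2 ∨ N + 1 = t)
    (hb : b < t) (hab : ¬ (a = t ∧ b = 0))
    (hS : (a : ℚ) + b * (1 - δ ^ 2) ≤ C) :
    ((a : ℚ) + b * (1 - δ ^ 2)) * (T - 1) ≤ (T - δ ^ 2) * N := by
  have hδ1 : δ ≤ 1 / 8 := by nlinarith
  have hδ2 : δ ^ 2 ≤ δ / 8 := by nlinarith
  have hδ3 : 0 < δ ^ 2 := by positivity
  have hTδ2 : T * δ ^ 2 = δ := by linear_combination δ * hδ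
  have ha0 : (0 : ℚ) ≤ a := by positivity
  have hb0 : (0 : ℚ) ≤ b := by positivity
  have hN0 : (0 : ℚ) ≤ N := by positivity
  rcases hr with hr | hr
  · -- `C < (N + 1) (1 - δ ^ 2)` forces `a + b ≤ N` by integrality.
    have hle : a + b ≤ N := by
      by_contra! hlt
      have h1 : (N : ℚ) + 1 ≤ a + b := by exact_mod_cast hlt
      nlinarith
    have h1 : (a : ℚ) + b ≤ N := by exact_mod_cast hle
    have h2 : (a : ℚ) + b * (1 - δ ^ 2) ≤ N := by nlinarith
    nlinarith
  · have hN : (N : ℚ) = T - 1 := by rw [← ht, ← hr]; push_cast; ring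
    have hb' : (b : ℚ) ≤ T - 1 := by
      have : (b : ℚ) + 1 ≤ t := by exact_mod_cast hb
      linarith
    have hbδ : b * δ ^ 2 ≤ δ - δ ^ 2 := by nlinarith
    have hle : a + b ≤ t := by
      by_contra! hlt
      have h1 : T + 1 ≤ a + b := by rw [← ht]; exact_mod_cast hlt
      linarith
    have goal : (a : ℚ) + b * (1 - δ ^ 2) ≤ T - δ ^ 2 := by
      rcases Nat.lt_or_ge (a + b) t with h | h
      · have h1 : (a : ℚ) + b + 1 ≤ T := by rw [← ht]; exact_mod_cast h
        nlinarith
      · have h1 : (a : ℚ) + b ≤ T := by rw [← ht]; exact_mod_cast hle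
        have hb1 : (1 : ℚ) ≤ b := by
          have : 1 ≤ b := by omega
          exact_mod_cast this
        nlinarith
    rw [hN]
    exact mul_le_mul_of_nonneg_right goal (by linarith)

/-! ### The equivalence -/

set_option maxHeartbeats 800000 in
/-- The unit-density hardness construction: `T = 2^k` with
`k ≥ 3`, weights `w₁ ≤ … ≤ wₙ` in `[2, T/2)`, `ε = 1/T²`, `m = log₂T − 1 = k−1`,
`m' = ⌈log₂ wₙ⌉`, `α = (T−ε)/((1−ε)(T−1))`.  The instance has regular items of
value `w` for `w ∈ W`, auxiliary items of value `2^{k'}(1−ε)` for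
`k' ∈ {0,…,m}`, and dummy items `d₀` of value `T+ε` and `d_{k'}` of value
`T·2^{k'}` for `k' ∈ {1,…,m'}`; each item's size equals its value.  The
universal policy `Π = (d_{m'}, …, d₀, j_m, …, j_0, i_{wₙ}, …, i_{w₁})` is
`α`-robust if and only if no subset of `W` sums to `T`.  Regular items are
`Sum.inl i`, auxiliary items `Sum.inr (Sum.inl j)`, dummy items
`Sum.inr (Sum.inr j)`. -/
theorem hardness_unit_density_policy_robust_iff (k nn : ℕ) (hk : 3 ≤ k)
    (hnn : 0 < nn)
    (w : Fin nn → ℕ) (hw2 : ∀ i, 2 ≤ w i) (hwT : ∀ i, 2 * w i < 2 ^ k)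
    (hwmono : Monotone w)
    (m' : ℕ) (hm' : m' = Nat.clog 2 (w ⟨nn - 1, by omega⟩))
    (ε α : ℚ) (hε : ε = 1 / (2 ^ k : ℚ) ^ 2)
    (hα : α = ((2 ^ k : ℚ) - ε) / ((1 - ε) * ((2 ^ k : ℚ) - 1)))
    (V : (Fin nn ⊕ Fin k ⊕ Fin (m' + 1)) → ℚ)
    (hV : V = Sum.elim (fun i => (w i : ℚ))
      (Sum.elim (fun j : Fin k => (2 : ℚ) ^ (j : ℕ) * (1 - ε))
        (fun j : Fin (m' + 1) =>
          if (j : ℕ) = 0 then (2 ^ k : ℚ) + ε else (2 ^ k : ℚ) * 2 ^ (j : ℕ))))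
    (P : List (Fin nn ⊕ Fin k ⊕ Fin (m' + 1)))
    (hP : P = ((List.finRange (m' + 1)).reverse.map (fun j => Sum.inr (Sum.inr j))) ++
      ((List.finRange k).reverse.map (fun j => Sum.inr (Sum.inl j))) ++
      ((List.finRange nn).reverse.map Sum.inl)) :
    (∀ C : ℚ, 0 ≤ C → C ≤ ∑ i, V i →
        ∀ S : Finset (Fin nn ⊕ Fin k ⊕ Fin (m' + 1)), ∑ i ∈ S, V i ≤ C →
          ∑ i ∈ S, V i ≤ α * ((pack V C P).map V).sum) ↔
      ¬ ∃ S : Finset (Fin nn), ∑ i ∈ S, w i = 2 ^ k := by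
  set T : ℚ := 2 ^ k with hTdef
  have hT : (8 : ℚ) ≤ T := by
    have : (2 : ℚ) ^ 3 ≤ 2 ^ k := pow_le_pow_right₀ (by norm_num) hk
    linarith
  obtain ⟨δ, hδdef⟩ : ∃ δ : ℚ, δ = 1 / T := ⟨_, rfl⟩
  have hδ : T * δ = 1 := by rw [hδdef]; field_simp
  have hδ0 : 0 < δ := by rw [hδdef]; positivity
  have hε' : ε = δ ^ 2 := by rw [hε, hδdef, div_pow, one_pow]
  have hδ1 : δ ≤ 1 / 8 := by nlinarith
  have hδ2 : δ ^ 2 ≤ δ / 8 := by nlinarith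
  have hδ3 : 0 < δ ^ 2 := by positivity
  have hTδ2 : T * δ ^ 2 = δ := by linear_combination δ * hδ
  rw [hε'] at hα hV
  have hD : 0 < (1 - δ ^ 2) * (T - 1) := mul_pos (by linarith) (by linarith)
  have hαD : α * ((1 - δ ^ 2) * (T - 1)) = T - δ ^ 2 := by rw [hα, div_mul_cancel₀ _ hD.ne']
  have hα1 : 1 + δ ≤ α := by
    rw [hα, le_div_iff₀ hD]
    nlinarith
  have htT : ((2 ^ k : ℕ) : ℚ) = T := by push_cast; rfl
  have hsizes : P.map V = ((List.range m').reverse.map fun j => (2 * T) * 2 ^ j) ++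
      ([T + δ ^ 2] ++ (((List.range k).reverse.map fun j => (1 - δ ^ 2) * 2 ^ j) ++
        ((List.finRange nn).reverse.map fun i => (w i : ℚ)))) := by
    have e1 : ((List.finRange (m' + 1)).reverse.map fun j => V (Sum.inr (Sum.inr j))) =
        ((List.range m').reverse.map fun j => (2 * T) * 2 ^ j) ++ [T + δ ^ 2] := by
      rw [List.finRange_succ, hV]
      simp only [List.reverse_cons, List.map_append, List.map_cons, List.map_nil, Sum.elim_inr,
        Fin.val_zero, if_true, ← List.map_reverse, List.map_map]
      rw [← List.map_coe_finRange_eq_range, ← List.map_reverse, List.map_map]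
      congr 1
      apply List.map_congr_left
      intro j _
      simp [pow_succ]
      ring
    have e2 : ((List.finRange k).reverse.map fun j => V (Sum.inr (Sum.inl j))) =
        (List.range k).reverse.map fun j => (1 - δ ^ 2) * 2 ^ j := by
      rw [← List.map_coe_finRange_eq_range, ← List.map_reverse, List.map_map, hV]
      apply List.map_congr_left
      intro j _
      simp [mul_comm]
    have e3 : ((List.finRange nn).reverse.map fun i => V (Sum.inl i)) =
        (List.finRange nn).reverse.map fun i => (w i : ℚ) := by
      rw [hV]; rfl
    rw [hP, List.map_append, List.map_append, List.map_map, List.map_map, List.map_map]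
    simp only [Function.comp_def]
    rw [e1, e2, e3]
    simp only [List.append_assoc]
  have hVnn : ∀ i, 0 ≤ V i := by
    rw [hV]
    rintro (i | j | j)
    · simp
    · exact mul_nonneg (by positivity) (by linarith)
    · simp only [Sum.elim_inr]
      split_ifs <;> positivity
  have hm1 : 2 ≤ 2 ^ m' ∧ ∀ i, w i ≤ 2 ^ m' := by
    constructor
    · exact (hw2 _).trans (hm' ▸ Nat.le_pow_clog (by norm_num) _)
    · intro i
      refine le_trans (hwmono (?_ : i ≤ ⟨nn - 1, by omega⟩)) (hm' ▸ Nat.le_pow_clog (by norm_num) _)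
      rw [Fin.le_def]
      have := i.isLt
      simp only
      omega
  have htotal : ∑ i, V i = ((2 : ℚ) ^ m' - 1) * (2 * T) + (T + δ ^ 2) + (T - 1) * (1 - δ ^ 2)
      + ∑ i, (w i : ℚ) := by
    have g : ∀ n : ℕ, ∑ j : Fin n, (2 : ℚ) ^ (j : ℕ) = 2 ^ n - 1 := by
      intro n
      rw [Fin.sum_univ_eq_sum_range (fun j => (2 : ℚ) ^ j), geom_sum_eq (by norm_num)]
      norm_num
    rw [hV, Fintype.sum_sum_type, Fintype.sum_sum_type]
    simp only [Sum.elim_inl, Sum.elim_inr]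
    rw [Fin.sum_univ_succ, ← Finset.sum_mul, g]
    simp only [Fin.val_zero, if_true, Fin.val_succ, Nat.succ_ne_zero, if_false, pow_succ]
    rw [← Finset.mul_sum, ← Finset.sum_mul, g]
    ring
  have hwsum : ((List.finRange nn).reverse.map fun i => (w i : ℚ)).sum = ∑ i, (w i : ℚ) := by
    rw [List.map_reverse, List.sum_reverse, ← List.ofFn_eq_map, List.sum_ofFn]
  constructor
  · rintro hrob ⟨S, hS⟩
    have hSV : ∑ i ∈ S.map Function.Embedding.inl, V i = T := by
      rw [Finset.sum_map, hV]
      simp only [Function.Embedding.inl_apply, Sum.elim_inl]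
      rw [← htT]
      exact_mod_cast hS
    have hTtot : T ≤ ∑ i, V i := by
      rw [← hSV]
      exact Finset.sum_le_univ_sum_of_nonneg hVnn
    have h := hrob T (by linarith) hTtot (S.map Function.Embedding.inl) hSV.le
    rw [hSV, sum_pack, hsizes, rest_append, rest_append, rest_append,
      rest_eq_self _ T (by
        intro x hx
        simp only [List.mem_map] at hx
        obtain ⟨j, _, rfl⟩ := hx
        have : (1 : ℚ) ≤ 2 ^ j := one_le_pow₀ (by norm_num)
        nlinarith),
      rest_eq_self _ T (by simp; linarith)] at h
    obtain ⟨N, hN, hr, h0, h1⟩ := rest_geom (1 - δ ^ 2) k T (by linarith)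
    rw [hr] at h
    have hN' : (N : ℚ) + 1 ≤ T := by rw [← htT]; exact_mod_cast hN
    have hNT : (N : ℚ) = T - 1 := by
      rcases h1 with h1 | h1
      · nlinarith
      · have : (N : ℚ) + 1 = T := by rw [← htT]; exact_mod_cast h1
        linarith
    rw [hNT, rest_eq_self _ _ (by
        intro x hx
        simp only [List.mem_map] at hx
        obtain ⟨i, _, rfl⟩ := hx
        have : (2 : ℚ) ≤ w i := by exact_mod_cast hw2 i
        nlinarith)] at h
    linarith
  · intro hno C hC0 _ S hSC
    rw [sum_pack, hsizes, rest_append, rest_append, rest_append]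
    obtain ⟨N₁, -, e₁, hr₁0, hr₁⟩ := rest_geom (2 * T) m' C hC0
    rw [e₁]
    obtain ⟨r₁, h₁⟩ : ∃ r, r = C - N₁ * (2 * T) := ⟨_, rfl⟩
    rw [← h₁] at hr₁0 hr₁ ⊢
    have hr₁' : r₁ < 2 * T ∨ (N₁ : ℚ) + 1 = 2 ^ m' := hr₁.imp id fun h => by exact_mod_cast h
    obtain ⟨r₂, h₂⟩ : ∃ r, r = if T + δ ^ 2 ≤ r₁ then r₁ - (T + δ ^ 2) else r₁ := ⟨_, rfl⟩
    have e₂ : rest r₁ [T + δ ^ 2] = r₂ := by rw [h₂, rest_cons]; rfl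
    have hr₂0 : 0 ≤ r₂ := by rw [h₂]; split_ifs <;> linarith
    rw [e₂]
    obtain ⟨N₃, -, e₃, hr₃0, hr₃⟩ := rest_geom (1 - δ ^ 2) k r₂ hr₂0
    rw [e₃]
    obtain ⟨r₃, h₃⟩ : ∃ r, r = r₂ - N₃ * (1 - δ ^ 2) := ⟨_, rfl⟩
    rw [← h₃] at hr₃0 hr₃ ⊢
    have hr₃' : r₃ < 1 - δ ^ 2 ∨ (N₃ : ℚ) + 1 = T :=
      hr₃.imp id fun h => by rw [← htT]; exact_mod_cast h
    have hwl : ∀ x ∈ (List.finRange nn).reverse.map (fun i => (w i : ℚ)),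
        0 ≤ x ∧ x ≤ (2 : ℚ) ^ m' := by
      intro x hx
      simp only [List.mem_map] at hx
      obtain ⟨i, _, rfl⟩ := hx
      exact ⟨by positivity, by exact_mod_cast hm1.2 i⟩
    have hr₄ := rest_lt_or_all _ _ r₃ hwl
    have h₄ := rest_le _ r₃ fun x hx => (hwl x hx).1
    rw [hwsum] at hr₄
    generalize rest r₃ ((List.finRange nn).reverse.map fun i => (w i : ℚ)) = r₄ at hr₄ h₄ ⊢
    have hN1 : (0 : ℚ) ≤ N₁ * (2 * T) := by positivity
    have hN3 : (0 : ℚ) ≤ N₃ * (1 - δ ^ 2) := mul_nonneg (by positivity) (by linarith)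
    have hr₂ : r₂ ≤ r₁ := by rw [h₂]; split_ifs <;> linarith
    have hpos : 0 ≤ C - r₄ := by linarith
    have hgrow := mul_le_mul_of_nonneg_right hα1 hpos
    rcases le_or_gt (T + δ ^ 2) C with hC | hC
    · rcases waste_of_dummy hT hδ hδ0 (by exact_mod_cast hm1.1) h₁ hr₁' h₂ h₃ hr₃' h₄ hr₄ hC
        with h | h
      · linarith
      · have : ∑ i ∈ S, V i ≤ ∑ i, V i := Finset.sum_le_univ_sum_of_nonneg hVnn
        rw [htotal, ← h] at this
        linarith [mul_nonneg hδ0.le hpos]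
    · have hN10 : N₁ = 0 := by
        by_contra hne
        have : (1 : ℚ) ≤ N₁ := by exact_mod_cast Nat.one_le_iff_ne_zero.mpr hne
        nlinarith
      have hr1C : r₁ = C := by rw [h₁, hN10]; push_cast; ring
      rw [hr1C, if_neg (not_le.mpr hC)] at h₂
      have hdummy : ∀ j, Sum.inr (Sum.inr j) ∉ S := by
        intro j hj
        have h1 := Finset.single_le_sum (f := V) (fun i _ => hVnn i) hj
        have h2 : T + δ ^ 2 ≤ V (Sum.inr (Sum.inr j)) := by
          rw [hV]
          simp only [Sum.elim_inr]
          split_ifs with h0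
          · exact le_rfl
          · have : (2 : ℚ) ^ 1 ≤ 2 ^ (j : ℕ) := pow_le_pow_right₀ (by norm_num) (by omega)
            nlinarith
        linarith
      have hSval : ∑ i ∈ S, V i = ((∑ i ∈ S.toLeft, w i : ℕ) : ℚ) +
          ((∑ j ∈ S.toRight.toLeft, 2 ^ (j : ℕ) : ℕ) : ℚ) * (1 - δ ^ 2) := by
        have hempty : S.toRight.toRight = ∅ := by
          ext j; simp [hdummy]
        conv_lhs => rw [← Finset.toLeft_disjSum_toRight (u := S),
          ← Finset.toLeft_disjSum_toRight (u := S.toRight), hempty]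
        rw [Finset.sum_disjSum, Finset.sum_disjSum, hV]
        simp [Finset.sum_mul]
      have hb : ∑ j ∈ S.toRight.toLeft, 2 ^ (j : ℕ) < 2 ^ k := by
        have h1 : ∑ j ∈ S.toRight.toLeft, 2 ^ (j : ℕ) ≤ ∑ j : Fin k, 2 ^ (j : ℕ) :=
          Finset.sum_le_univ_sum_of_nonneg fun _ => Nat.zero_le _
        rw [Fin.sum_univ_eq_sum_range (fun j => 2 ^ j)] at h1
        exact h1.trans_lt (Nat.geomSum_lt le_rfl fun j hj => Finset.mem_range.mp hj)
      rw [hSval] at hSC ⊢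
      have hlight := light_case (N := N₃) htT hT hδ hδ0 hC
        (by rw [h₂] at h₃; rw [← h₃]; exact hr₃) hb (fun h => hno ⟨_, h.1⟩) hSC
      -- multiply the target by `T - 1 > 0` and use the definition of `α`
      have hαN : α * (N₃ * (1 - δ ^ 2)) * (T - 1) = (T - δ ^ 2) * N₃ := by
        linear_combination (N₃ : ℚ) * hαD
      rw [← hαN] at hlight
      have h5 := le_of_mul_le_mul_right hlight (by linarith : 0 < T - 1)
      refine h5.trans (mul_le_mul_of_nonneg_left ?_ (by linarith))
      linarith
end

section
/- Let k ≥ 3 be an integer, T = 2^k (so T ≥ 8), and let W = {w₁,…,wₙ} be positive integers with 2 ≤ wᵢ < T/2 and w₁ ≤ … ≤ wₙ. Set ε = 1/T², m = log₂T − 1, m' = ⌈log₂ wₙ⌉ and α = (T−ε)/((1−ε)(T−1)). Build the unit-density instance 𝓘 (each item's size equals its value): for each w ∈ W a regular item i_w of value w; for each k' ∈ {0,…,m} an auxiliary item j_{k'} of value 2^{k'}(1−ε); and dummy items d₀ of value T+ε and d_{k'} of value T·2^{k'} for k' ∈ {1,…,m'}. Let Π be the universal policy (d_{m'}, d_{m'−1},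 …, d₁, d₀, j_m, j_{m−1}, …, j_0, i_{wₙ}, i_{w_{n−1}}, …, i_{w₁}). Then, unconditionally, for every capacity C with 0 ≤ C ≤ l(𝓘) that does not lie in the critical interval [T − εT, T + ε), it holds that v(Opt(𝓘,C)) ≤ α·v(Π(C)). -/
theorem pack_append {α : Type*} (V : α → ℚ) (L M : List α) (C : ℚ) :
    pack V C (L ++ M) = pack V C L ++ pack V (C - ((pack V C L).map V).sum) M := by
  induction L generalizing C with
  | nil => simp [pack]
  | cons x xs ih =>
    by_cases h : V x ≤ C
    · simp [pack, h, ih, sub_sub]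
    · simp [pack, h, ih]

theorem pack_sum_nonneg {α : Type*} (V : α → ℚ) (L : List α) (C : ℚ)
    (hV : ∀ x, 0 ≤ V x) : 0 ≤ ((pack V C L).map V).sum := by
  apply List.sum_nonneg
  intro y hy
  obtain ⟨x, -, rfl⟩ := List.mem_map.1 hy
  exact hV x

theorem pack_sum_le {α : Type*} (V : α → ℚ) (L : List α) (C : ℚ) (hC : 0 ≤ C) :
    ((pack V C L).map V).sum ≤ C := by
  induction L generalizing C with
  | nil => simpa [pack] using hC
  | cons x xs ih =>
    by_cases h : V x ≤ C
    · have := ih (C - V x) (by linarith)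
      simp only [pack, h, if_true, List.map_cons, List.sum_cons]
      linarith
    · simpa only [pack, h, if_false] using ih C hC

/-- Either the scan packs everything, or some item was rejected and the final unused capacity is
smaller than that item. -/
theorem pack_all_or_gap {α : Type*} (V : α → ℚ) (L : List α) (C : ℚ)
    (hV : ∀ x, 0 ≤ V x) :
    ((pack V C L).map V).sum = (L.map V).sum ∨
      ∃ x ∈ L, C - ((pack V C L).map V).sum < V x := by
  induction L generalizing C with
  | nil => simp [pack]
  | cons x xs ih =>
    by_cases h : V x ≤ C
    · rcases ih (C - V x) with h1 | ⟨y, hy, h1⟩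
      · left; simp [pack, h, h1]
      · right
        refine ⟨y, by simp [hy], ?_⟩
        simp only [pack, h, if_true, List.map_cons, List.sum_cons]
        linarith
    · right
      refine ⟨x, by simp, ?_⟩
      have := pack_sum_nonneg V xs C hV
      simp only [pack, h, if_false]
      linarith

/-- Scanning items of sizes `u 2^(n-1), …, 2u, u` packs the binary expansion of
`q = min ⌊C / u⌋ (2 ^ n - 1)` (for `u > 0`). -/
theorem pack_geometric {α : Type*} (V : α → ℚ) (u : ℚ) (n : ℕ) (f : Fin n → α)
    (hf : ∀ j, V (f j) = u * 2 ^ (j : ℕ)) (C : ℚ) (hC : 0 ≤ C) :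
    ∃ q : ℕ, ((pack V C ((List.finRange n).reverse.map f)).map V).sum = u * q ∧
      u * q ≤ C ∧ (q : ℚ) ≤ 2 ^ n - 1 ∧ (C < u * (q + 1) ∨ (q : ℚ) = 2 ^ n - 1) := by
  induction n generalizing C with
  | zero => exact ⟨0, by simp [pack], by simpa using hC, by simp, by simp⟩
  | succ n ih =>
    have hL : (List.finRange (n + 1)).reverse.map f
        = f (Fin.last n) :: (List.finRange n).reverse.map (fun j => f j.castSucc) := by
      simp [List.finRange_succ_last, List.map_reverse, Function.comp_def]
    have hlast : V (f (Fin.last n)) = u * 2 ^ n := by simp [hf]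
    have hf' : ∀ j : Fin n, V (f j.castSucc) = u * 2 ^ (j : ℕ) := fun j => by simp [hf]
    rw [hL]
    by_cases h : u * 2 ^ n ≤ C
    · obtain ⟨q, h1, h2, h3, h4⟩ := ih (fun j => f j.castSucc) hf' (C - u * 2 ^ n) (by linarith)
      refine ⟨2 ^ n + q, ?_, ?_, ?_, ?_⟩
      · simp only [pack, hlast, h, if_true, List.map_cons, List.sum_cons, h1]
        push_cast; ring
      · push_cast; linarith
      · push_cast; rw [pow_succ]; linarith
      · push_cast; rw [pow_succ]
        rcases h4 with h4 | h4
        · left; linarith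
        · right; linarith
    · obtain ⟨q, h1, h2, h3, h4⟩ := ih (fun j => f j.castSucc) hf' C hC
      refine ⟨q, ?_, h2, ?_, ?_⟩
      · simp only [pack, hlast, h, if_false, h1]
      · rw [pow_succ]; have : (0 : ℚ) < 2 ^ n := by positivity
        linarith
      · left
        rcases h4 with h4 | h4
        · exact h4
        · rw [h4]; push Not at h; linarith

theorem sum_fin_two_pow (n : ℕ) : ∑ j : Fin n, (2 : ℚ) ^ (j : ℕ) = 2 ^ n - 1 := by
  induction n with
  | zero => simp
  | succ n ih => rw [Fin.sum_univ_castSucc]; simp [ih, pow_succ]; ring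

/-- A packing of value `Q` whose unused capacity is at most `C / T` achieves the ratio `α`. -/
theorem gap_bound (T ε X Q C : ℚ) (hT : 8 ≤ T) (hε0 : 0 < ε) (hε1 : ε < 1) (hC : 0 ≤ C)
    (hX : X ≤ C) (hg : T * (C - Q) ≤ C) (hQ : Q ≤ C) :
    X ≤ (T - ε) / ((1 - ε) * (T - 1)) * Q := by
  have hpos : 0 < (1 - ε) * (T - 1) := mul_pos (by linarith) (by linarith)
  rw [div_mul_eq_mul_div, le_div_iff₀ hpos]
  have h1 : X * ((1 - ε) * (T - 1)) ≤ C * ((1 - ε) * (T - 1)) :=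
    mul_le_mul_of_nonneg_right hX hpos.le
  have h2 : 0 ≤ ε * (C - Q) := mul_nonneg hε0.le (by linarith)
  have h3 : 0 ≤ ε * (T - 2) * C := mul_nonneg (mul_nonneg hε0.le (by linarith)) hC
  nlinarith

/-- The unit-density hardness construction: `T = 2^k` with
`k ≥ 3`, weights `w₁ ≤ … ≤ wₙ` in `[2, T/2)`, `ε = 1/T²`, `m = log₂T − 1 = k−1`,
`m' = ⌈log₂ wₙ⌉`, `α = (T−ε)/((1−ε)(T−1))`.  The instance has regular items of
value `w` for `w ∈ W`, auxiliary items of value `2^{k'}(1−ε)` for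
`k' ∈ {0,…,m}`, and dummy items `d₀` of value `T+ε` and `d_{k'}` of value
`T·2^{k'}` for `k' ∈ {1,…,m'}`; each item's size equals its value.  The
universal policy `Π = (d_{m'}, …, d₀, j_m, …, j_0, i_{wₙ}, …, i_{w₁})`
unconditionally satisfies `v(Opt(𝓘,C)) ≤ α·v(Π(C))` for every capacity
`0 ≤ C ≤ l(𝓘)` outside the critical interval `[T − εT, T + ε)`.  Regular items
are `Sum.inl i`, auxiliary items `Sum.inr (Sum.inl j)`, dummy items
`Sum.inr (Sum.inr j)`. -/
theorem hardness_unit_density_policy_robust_off_critical (k nn : ℕ) (hk : 3 ≤ k)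
    (hnn : 0 < nn)
    (w : Fin nn → ℕ) (hw2 : ∀ i, 2 ≤ w i) (hwT : ∀ i, 2 * w i < 2 ^ k)
    (hwmono : Monotone w)
    (m' : ℕ) (hm' : m' = Nat.clog 2 (w ⟨nn - 1, by omega⟩))
    (ε α : ℚ) (hε : ε = 1 / (2 ^ k : ℚ) ^ 2)
    (hα : α = ((2 ^ k : ℚ) - ε) / ((1 - ε) * ((2 ^ k : ℚ) - 1)))
    (V : (Fin nn ⊕ Fin k ⊕ Fin (m' + 1)) → ℚ)
    (hV : V = Sum.elim (fun i => (w i : ℚ))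
      (Sum.elim (fun j : Fin k => (2 : ℚ) ^ (j : ℕ) * (1 - ε))
        (fun j : Fin (m' + 1) =>
          if (j : ℕ) = 0 then (2 ^ k : ℚ) + ε else (2 ^ k : ℚ) * 2 ^ (j : ℕ))))
    (P : List (Fin nn ⊕ Fin k ⊕ Fin (m' + 1)))
    (hP : P = ((List.finRange (m' + 1)).reverse.map (fun j => Sum.inr (Sum.inr j))) ++
      ((List.finRange k).reverse.map (fun j => Sum.inr (Sum.inl j))) ++
      ((List.finRange nn).reverse.map Sum.inl))
    (C : ℚ) (hC0 : 0 ≤ C) (hC1 : C ≤ ∑ i, V i)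
    (hCcrit : ¬ ((2 ^ k : ℚ) - ε * 2 ^ k ≤ C ∧ C < (2 ^ k : ℚ) + ε))
    (S : Finset (Fin nn ⊕ Fin k ⊕ Fin (m' + 1))) (hS : ∑ i ∈ S, V i ≤ C) :
    ∑ i ∈ S, V i ≤ α * ((pack V C P).map V).sum := by
  set T : ℚ := (2 : ℚ) ^ k with hTdef
  have hT : 8 ≤ T := by
    calc (8 : ℚ) = 2 ^ 3 := by norm_num
      _ ≤ 2 ^ k := pow_le_pow_right₀ (by norm_num) hk
  have hεT : ε * T * T = 1 := by rw [hε]; field_simp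
  have hε0 : 0 < ε := by rw [hε]; positivity
  -- `δ = ε T = 1 / T` is the natural size of the error terms.
  obtain ⟨δ, hδ⟩ : ∃ δ, δ = ε * T := ⟨_, rfl⟩
  have hδ0 : 0 < δ := by rw [hδ]; positivity
  have hδT : T * δ = 1 := by rw [hδ]; linarith
  have hδ8 : δ ≤ 1 / 8 := by nlinarith
  have hεδ : 8 * ε ≤ δ := by rw [hδ]; nlinarith
  have hε1 : ε < 1 := by linarith
  have hTδ : T * (1 - ε) = T - δ := by rw [hδ]; ring
  have hVr : ∀ i, V (Sum.inl i) = w i := fun i => by simp [hV]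
  have hVa : ∀ j : Fin k, V (Sum.inr (Sum.inl j)) = (1 - ε) * 2 ^ (j : ℕ) := fun j => by
    simp [hV, mul_comm]
  have hVd0 : V (Sum.inr (Sum.inr 0)) = T + ε := by simp [hV]
  have hVd : ∀ j : Fin m', V (Sum.inr (Sum.inr j.succ)) = (2 * T) * 2 ^ (j : ℕ) := fun j => by
    simp only [hV, Sum.elim_inr, Fin.val_succ, Nat.succ_ne_zero, if_false, pow_succ]; ring
  have hV0 : ∀ x, 0 ≤ V x := by
    rintro (i | j | j)
    · rw [hVr]; positivity
    · rw [hVa]; have : 0 < 1 - ε := by linarith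
      positivity
    · refine Fin.cases ?_ (fun j => ?_) j
      · rw [hVd0]; linarith
      · rw [hVd]; positivity
  have hVsum : ∑ i, V i = (∑ i, (w i : ℚ)) + (1 - ε) * (T - 1)
      + ((T + ε) + 2 * T * (2 ^ m' - 1)) := by
    simp only [Fintype.sum_sum_type, Fin.sum_univ_succ (n := m'), hVr, hVa, hVd0, hVd,
      ← Finset.mul_sum, sum_fin_two_pow, hTdef, add_assoc]
  have hSle : ∑ i ∈ S, V i ≤ ∑ i, V i :=
    Finset.sum_le_sum_of_subset_of_nonneg (Finset.subset_univ _) (fun x _ _ => hV0 x)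
  -- The policy splits into four blocks: large dummies, `d₀`, auxiliary items, regular items.
  have hP' : P = ((List.finRange m').reverse.map (fun j => Sum.inr (Sum.inr j.succ))) ++
      ([Sum.inr (Sum.inr 0)] ++
      (((List.finRange k).reverse.map (fun j => Sum.inr (Sum.inl j))) ++
      ((List.finRange nn).reverse.map Sum.inl))) := by
    rw [hP]; simp [List.finRange_succ, List.map_reverse, Function.comp_def]
  rw [hP', pack_append]
  obtain ⟨q, hq, hqC, hqle, hqor⟩ := pack_geometric V (2 * T) m'
    (fun j => Sum.inr (Sum.inr j.succ)) hVd C hC0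
  rw [List.map_append, List.sum_append, hq, pack_append]
  -- `R` is the capacity left after the large dummies, `D` the contribution of `d₀`.
  obtain ⟨R, hR⟩ : ∃ R, R = C - 2 * T * q := ⟨_, rfl⟩
  rw [← hR, List.map_append, List.sum_append]
  obtain ⟨D, hD⟩ : ∃ D, D = ((pack V R [Sum.inr (Sum.inr (0 : Fin (m' + 1)))]).map V).sum :=
    ⟨_, rfl⟩
  have hDcase : (T + ε ≤ R ∧ D = T + ε) ∨ (R < T + ε ∧ D = 0) := by
    by_cases h : T + ε ≤ R
    · left; refine ⟨h, ?_⟩; rw [hD]; simp [pack, hVd0, h]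
    · right; refine ⟨not_le.1 h, ?_⟩; rw [hD]; simp [pack, hVd0, h]
  rw [← hD, pack_append]
  have hRD : 0 ≤ R - D := by
    rcases hDcase with h | h <;> linarith
  obtain ⟨p, hp, hpC, hple, hpor⟩ := pack_geometric V (1 - ε) k
    (fun j => Sum.inr (Sum.inl j)) hVa (R - D) hRD
  rw [← hTdef] at hple hpor
  rw [List.map_append, List.sum_append, hp]
  obtain ⟨Y, hY⟩ : ∃ Y, Y = R - D - (1 - ε) * p := ⟨_, rfl⟩
  rw [← hY]
  obtain ⟨r, hr⟩ : ∃ r, r = ((pack V Y ((List.finRange nn).reverse.map Sum.inl)).map V).sum :=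
    ⟨_, rfl⟩
  have hr0 : 0 ≤ r := hr ▸ pack_sum_nonneg V _ Y hV0
  have hror := pack_all_or_gap V ((List.finRange nn).reverse.map Sum.inl) Y hV0
  have hallw : (((List.finRange nn).reverse.map
      (Sum.inl : Fin nn → Fin nn ⊕ Fin k ⊕ Fin (m' + 1))).map V).sum = ∑ i, (w i : ℚ) := by
    rw [Fin.sum_univ_def, List.map_reverse, List.map_reverse, List.sum_reverse, List.map_map]
    congr 1
    exact List.map_congr_left fun i _ => hVr i
  rw [← hr, hallw] at hror
  rw [← hr]
  have hrY : r ≤ Y := by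
    rw [hr]; exact pack_sum_le V _ Y (by linarith)
  have hαrw : α = (T - ε) / ((1 - ε) * (T - 1)) := hα
  have hgap : T * (Y - r) ≤ C → ∑ i ∈ S, V i ≤ α * (2 * T * q + (D + ((1 - ε) * p + r))) := by
    intro h
    rw [hαrw]
    refine gap_bound T ε _ _ C hT hε0 hε1 hC0 hS ?_ (by linarith)
    have : C - (2 * T * q + (D + ((1 - ε) * p + r))) = Y - r := by linarith
    rw [this]; exact h
  have hpos : 0 < (1 - ε) * (T - 1) := mul_pos (by linarith) (by linarith)
  by_cases hClow : C < T - δ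
  · -- Below the critical interval no dummy fits, and the auxiliary items alone suffice.
    have hq0 : q = 0 := by
      rcases Nat.eq_zero_or_pos q with h | h
      · exact h
      · have : (1 : ℚ) ≤ q := by exact_mod_cast h
        have := mul_le_mul_of_nonneg_left this (by linarith : 0 ≤ 2 * T)
        linarith
    have hRC : R = C := by rw [hR, hq0]; simp
    have hD0 : D = 0 := by
      rcases hDcase with h | h
      · linarith [h.1]
      · exact h.2
    have hCp : C < (1 - ε) * (p + 1) := by
      rcases hpor with h | h
      · linarith
      · rw [h]; linarith
    have hdec : ∀ S' : Finset (Fin nn ⊕ Fin k ⊕ Fin (m' + 1)), (∀ x ∈ S', V x ≤ C) →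
        ∃ a b : ℕ, ∑ i ∈ S', V i = a * (1 - ε) + b := by
      intro S'
      induction S' using Finset.induction_on with
      | empty => intro _; exact ⟨0, 0, by simp⟩
      | insert x s hx ih =>
        intro h
        obtain ⟨a, b, hab⟩ := ih fun y hy => h y (Finset.mem_insert_of_mem hy)
        rw [Finset.sum_insert hx, hab]
        have hxC := h x (Finset.mem_insert_self _ _)
        rcases x with i | j | j
        · exact ⟨a, b + w i, by rw [hVr]; push_cast; ring⟩
        · exact ⟨a + 2 ^ (j : ℕ), b, by rw [hVa]; push_cast; ring⟩
        · exfalso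
          revert hxC
          refine Fin.cases ?_ (fun j => ?_) j
          · rw [hVd0]; intro; linarith
          · rw [hVd]; intro
            have : (1 : ℚ) ≤ 2 ^ (j : ℕ) := one_le_pow₀ (by norm_num)
            have := mul_le_mul_of_nonneg_left this (by linarith : 0 ≤ 2 * T)
            linarith
    obtain ⟨a, b, hab⟩ := hdec S fun x hx =>
      (Finset.single_le_sum (fun y _ => hV0 y) hx).trans hS
    have hb0 : (0 : ℚ) ≤ b := Nat.cast_nonneg b
    have ha0 : (0 : ℚ) ≤ a := Nat.cast_nonneg a
    have habp : a + b ≤ p := by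
      by_contra hcon
      have h1 : (p : ℚ) + 1 ≤ a + b := by exact_mod_cast not_le.1 hcon
      have h2 : (1 - ε) * (p + 1) ≤ (1 - ε) * (a + b) :=
        mul_le_mul_of_nonneg_left h1 (by linarith)
      have h3 : 0 ≤ ε * b := by positivity
      linarith
    have habp' : (a : ℚ) + b ≤ p := by exact_mod_cast habp
    have hXp : ∑ i ∈ S, V i ≤ p := by
      rw [hab]; have : 0 ≤ ε * a := by positivity
      linarith
    have hp0 : (0 : ℚ) ≤ p := Nat.cast_nonneg p
    rw [hq0, hD0, hαrw, div_mul_eq_mul_div, le_div_iff₀ hpos]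
    have h1 := mul_le_mul_of_nonneg_right hXp hpos.le
    have h2 : 0 ≤ (T - ε) * r := mul_nonneg (by linarith) hr0
    have h3 : 0 ≤ (1 - ε) * (1 - ε) * p := by
      have : 0 ≤ 1 - ε := by linarith
      positivity
    push_cast
    linarith
  · have hChi : T + ε ≤ C := by
      by_contra h
      exact hCcrit ⟨by rw [← hδ]; linarith, not_le.1 h⟩
    rcases hpor with hpor | hpor
    · -- The auxiliary items leave less than `1 - ε`.
      apply hgap
      have h1 : Y - r ≤ 1 := by linarith
      have h2 := mul_le_mul_of_nonneg_left h1 (by linarith : 0 ≤ T)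
      linarith
    · have hYle : Y = R - D - (T - 1 - δ + ε) := by rw [hY, hpor, hδ]; ring
      rcases hDcase with ⟨hRge, hDe⟩ | ⟨hRlt, hDe⟩
      · rcases hqor with hqor | hqor
        · -- `d₀` and all auxiliary items are packed, with `R < 2T`.
          apply hgap
          have h1 : Y - r ≤ 1 + δ := by linarith
          have h2 : T * (Y - r) ≤ T * (1 + δ) := mul_le_mul_of_nonneg_left h1 (by linarith)
          have h3 : (0 : ℚ) ≤ 2 * T * q := by positivity
          linarith
        · rcases hror with hror | ⟨x, hx, hxgap⟩
          · -- Every item is packed.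
            have hall : 2 * T * q + (D + ((1 - ε) * p + r)) = ∑ i, V i := by
              rw [hVsum, hqor, hDe, hpor, hror]; ring
            have hα1 : 1 ≤ α := by
              rw [hαrw, le_div_iff₀ hpos]
              have : (1 - ε) * (T - 1) = T - δ - 1 + ε := by rw [hδ]; ring
              linarith
            rw [hall]
            exact hSle.trans (le_mul_of_one_le_left (by linarith) hα1)
          · apply hgap
            obtain ⟨i, -, rfl⟩ := List.mem_map.1 hx
            rw [hVr] at hxgap
            have hw : w i ≤ 2 ^ m' := by
              rw [hm']
              refine le_trans (hwmono ?_) (Nat.le_pow_clog (by norm_num) _)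
              rw [Fin.le_def]
              have := i.2
              change (i : ℕ) ≤ nn - 1
              omega
            have hw' : (w i : ℚ) ≤ 2 ^ m' := by exact_mod_cast hw
            have h1 : T * (Y - r) ≤ T * 2 ^ m' := mul_le_mul_of_nonneg_left (by linarith)
              (by linarith)
            have h2 : T * 1 ≤ T * (2 : ℚ) ^ m' := mul_le_mul_of_nonneg_left
              (one_le_pow₀ (by norm_num)) (by linarith)
            have h3 : 2 * T * (q : ℚ) = 2 * (T * 2 ^ m') - 2 * T := by rw [hqor]; ring
            have h4 : 0 ≤ Y := by linarith
            linarith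
      · -- `d₀` is rejected although `C ≥ T + ε`, so some large dummy is packed and `2T ≤ C`.
        apply hgap
        have hq1 : 1 ≤ q := by
          rcases Nat.eq_zero_or_pos q with h | h
          · exfalso; rw [h] at hR; push_cast at hR; linarith
          · exact h
        have hq1' : (1 : ℚ) ≤ q := by exact_mod_cast hq1
        have hC2 : 2 * T ≤ C := by
          have := mul_le_mul_of_nonneg_left hq1' (by linarith : 0 ≤ 2 * T)
          linarith
        have h1 : Y - r ≤ 2 := by linarith
        have h2 : T * (Y - r) ≤ T * 2 := mul_le_mul_of_nonneg_left h1 (by linarith)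
        linarith
end
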